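/- Let c ∈ [0,1] and suppose u is a solution of the traveling wave system for the Landau–Lifshitz equation with ‖u₃‖_{L^∞(ℝᴺ)} ≤ 1/2, satisfying the integral identities (i) ∫ϱ²|∇θ|² = c∫u₃∂₁θ and (ii) ∫|∇u₃|² + ∫u₃² = 2∫e(u)u₃² + c∫ϱ²u₃∂₁θ, where ϱ² = 1 − u₃². If additionally ∫|∇ϱ|² ≤ (7/18)∫u₃² and ∫ϱ²|∇θ|² ≤ (4/3)∫u₃², then ∫|∇u₃|² ≤ 2∫u₃² and E(u) = (1/2)∫(|∇ϱ|² + ϱ²|∇θ|² + |∇u₃|² + u₃²) ≤ 3∫u₃². -/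

import Mathlib

open MeasureTheory

/-
The integrand of `∫ e(u) u₃²` carries the factor `u₃² ≤ δ²`, and `c ∫ ϱ² u₃ ∂₁θ` is at most
`(∫ u₃²)^{1/2} (∫ ϱ² |∇θ|²)^{1/2}` by Cauchy–Schwarz and `ϱ⁴ ≤ ϱ²`. Absorbing the part
`δ² ∫ (|∇u₃|² + u₃²)` of the first term into the left-hand side of the second integral identity
bounds `∫ |∇u₃|²` by the other three terms of the energy.
-/

section IntegralEstimates

variable {X : Type*} [MeasurableSpace X] {μ : Measure X}

lemma abs_integral_mul_le_sqrt_mul_sqrt {f g : X → ℝ} (hf : MemLp f 2 μ) (hg : MemLp g 2 μ) :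
    |∫ x, f x * g x ∂μ| ≤ √(∫ x, f x ^ 2 ∂μ) * √(∫ x, g x ^ 2 ∂μ) := by
  have holder := integral_mul_norm_le_Lp_mul_Lq (μ := μ) (f := f) (g := g)
    Real.HolderConjugate.two_two (by simpa using hf) (by simpa using hg)
  simp only [Real.rpow_two, Real.norm_eq_abs, sq_abs, ← abs_mul, ← Real.sqrt_eq_rpow] at holder
  exact abs_integral_le_integral_abs.trans holder

lemma integral_mul_sq_le_of_abs_le {f g : X → ℝ} {δ : ℝ} (hf : Integrable f μ)
    (hf_nonneg : ∀ x, 0 ≤ f x) (hg : ∀ x, |g x| ≤ δ) :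
    ∫ x, f x * g x ^ 2 ∂μ ≤ δ ^ 2 * ∫ x, f x ∂μ := by
  have hle (x : X) : f x * g x ^ 2 ≤ δ ^ 2 * f x := by
    rw [mul_comm]
    exact mul_le_mul_of_nonneg_right (sq_le_sq' (abs_le.1 (hg x)).1 (abs_le.1 (hg x)).2)
      (hf_nonneg x)
  rw [← integral_const_mul]
  exact integral_mono_of_nonneg (.of_forall fun x ↦ mul_nonneg (hf_nonneg x) (sq_nonneg _))
    (hf.const_mul _) (.of_forall hle)

lemma abs_integral_sq_mul_mul_le_sqrt_mul_sqrt {u ϱ d w : X → ℝ} (hu : MemLp u 2 μ)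
    (hϱ : AEStronglyMeasurable ϱ μ) (hϱ_le : ∀ x, ϱ x ^ 2 ≤ 1)
    (hd : AEStronglyMeasurable d μ) (hdw : ∀ x, |d x| ≤ w x)
    (hw : Integrable (fun x ↦ ϱ x ^ 2 * w x ^ 2) μ) :
    |∫ x, ϱ x ^ 2 * u x * d x ∂μ| ≤ √(∫ x, u x ^ 2 ∂μ) * √(∫ x, ϱ x ^ 2 * w x ^ 2 ∂μ) := by
  have hsq_le (x : X) : (ϱ x ^ 2 * d x) ^ 2 ≤ ϱ x ^ 2 * w x ^ 2 := by
    have hdw_sq : d x ^ 2 ≤ w x ^ 2 := sq_le_sq' (abs_le.1 (hdw x)).1 (abs_le.1 (hdw x)).2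
    calc (ϱ x ^ 2 * d x) ^ 2 = ϱ x ^ 2 * (ϱ x ^ 2 * d x ^ 2) := by ring
      _ ≤ ϱ x ^ 2 * (1 * w x ^ 2) := by gcongr; exact hϱ_le x
      _ = ϱ x ^ 2 * w x ^ 2 := by rw [one_mul]
  have hmeas : AEStronglyMeasurable (fun x ↦ ϱ x ^ 2 * d x) μ := (hϱ.pow 2).mul hd
  have hmem : MemLp (fun x ↦ ϱ x ^ 2 * d x) 2 μ :=
    (memLp_two_iff_integrable_sq hmeas).2 <| hw.mono' (hmeas.pow 2) <| .of_forall fun x ↦ by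
      rw [Real.norm_of_nonneg (sq_nonneg _)]
      exact hsq_le x
  calc |∫ x, ϱ x ^ 2 * u x * d x ∂μ| = |∫ x, u x * (ϱ x ^ 2 * d x) ∂μ| := by
        simp only [mul_left_comm, mul_assoc]
    _ ≤ √(∫ x, u x ^ 2 ∂μ) * √(∫ x, (ϱ x ^ 2 * d x) ^ 2 ∂μ) :=
        abs_integral_mul_le_sqrt_mul_sqrt hu hmem
    _ ≤ √(∫ x, u x ^ 2 ∂μ) * √(∫ x, ϱ x ^ 2 * w x ^ 2 ∂μ) := by
        gcongr ?_ * √?_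
        exact integral_mono hmem.integrable_sq hw hsq_le

end IntegralEstimates

section Energy

variable {X F : Type*} [NormedAddCommGroup F] {u₃ ϱ : X → ℝ} {Du₃ Dϱ Dθ : X → F}

/-- The Landau–Lifshitz energy density `e(u)` of the map `u = (ϱ cos θ, ϱ sin θ, u₃)`. The
gradients of `u₃`, `ϱ` and `θ` are given as arbitrary vector fields `Du₃`, `Dϱ` and `Dθ`, so that
estimates of `e(u)` apply to any notion of derivative. -/
noncomputable def energyDensity (u₃ ϱ : X → ℝ) (Du₃ Dϱ Dθ : X → F) (x : X) : ℝ :=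
  (1 / 2) * (‖Dϱ x‖ ^ 2 + ϱ x ^ 2 * ‖Dθ x‖ ^ 2 + ‖Du₃ x‖ ^ 2 + u₃ x ^ 2)

lemma energyDensity_nonneg (x : X) : 0 ≤ energyDensity u₃ ϱ Du₃ Dϱ Dθ x := by
  unfold energyDensity
  positivity

variable [MeasurableSpace X] {μ : Measure X}

/-- Finiteness of the Landau–Lifshitz energy `E(u) = ∫ e(u)`, stated for each of the four terms
of the density separately, since the estimates bound these terms one by one. -/
structure HasFiniteEnergy (u₃ ϱ : X → ℝ) (Du₃ Dϱ Dθ : X → F) (μ : Measure X) : Prop where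
  integrable_sq : Integrable (fun x ↦ u₃ x ^ 2) μ
  integrable_norm_Du₃_sq : Integrable (fun x ↦ ‖Du₃ x‖ ^ 2) μ
  integrable_norm_Dϱ_sq : Integrable (fun x ↦ ‖Dϱ x‖ ^ 2) μ
  integrable_sq_mul_norm_Dθ_sq : Integrable (fun x ↦ ϱ x ^ 2 * ‖Dθ x‖ ^ 2) μ

namespace HasFiniteEnergy

lemma integrable_energyDensity (h : HasFiniteEnergy u₃ ϱ Du₃ Dϱ Dθ μ) :
    Integrable (energyDensity u₃ ϱ Du₃ Dϱ Dθ) μ :=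
  (((h.integrable_norm_Dϱ_sq.add h.integrable_sq_mul_norm_Dθ_sq).add
    h.integrable_norm_Du₃_sq).add h.integrable_sq).const_mul _

lemma integral_energyDensity (h : HasFiniteEnergy u₃ ϱ Du₃ Dϱ Dθ μ) :
    ∫ x, energyDensity u₃ ϱ Du₃ Dϱ Dθ x ∂μ =
      (1 / 2) * ((∫ x, ‖Dϱ x‖ ^ 2 ∂μ) + (∫ x, ϱ x ^ 2 * ‖Dθ x‖ ^ 2 ∂μ) +
        (∫ x, ‖Du₃ x‖ ^ 2 ∂μ) + ∫ x, u₃ x ^ 2 ∂μ) := by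
  obtain ⟨hu₃, hDu₃, hDϱ, hDθ⟩ := h
  unfold energyDensity
  rw [integral_const_mul, integral_add (by exact (hDϱ.add hDθ).add hDu₃) hu₃,
    integral_add (by exact hDϱ.add hDθ) hDu₃, integral_add hDϱ hDθ]

/-- `d` stands for the derivative of the phase `θ` in the direction of propagation. -/
theorem one_sub_sq_mul_integral_add_integral_le (h : HasFiniteEnergy u₃ ϱ Du₃ Dϱ Dθ μ)
    {c δ : ℝ} {d : X → ℝ}
    (hc : |c| ≤ 1) (hu₃ : AEStronglyMeasurable u₃ μ) (hu₃_le : ∀ x, |u₃ x| ≤ δ)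
    (hϱ : AEStronglyMeasurable ϱ μ) (hϱ_le : ∀ x, ϱ x ^ 2 ≤ 1)
    (hd : AEStronglyMeasurable d μ) (hd_le : ∀ x, |d x| ≤ ‖Dθ x‖)
    (identity : (∫ x, ‖Du₃ x‖ ^ 2 ∂μ) + (∫ x, u₃ x ^ 2 ∂μ) =
      2 * (∫ x, energyDensity u₃ ϱ Du₃ Dϱ Dθ x * u₃ x ^ 2 ∂μ) +
        c * ∫ x, ϱ x ^ 2 * u₃ x * d x ∂μ) :
    (1 - δ ^ 2) * ((∫ x, ‖Du₃ x‖ ^ 2 ∂μ) + ∫ x, u₃ x ^ 2 ∂μ) ≤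
      δ ^ 2 * ((∫ x, ‖Dϱ x‖ ^ 2 ∂μ) + ∫ x, ϱ x ^ 2 * ‖Dθ x‖ ^ 2 ∂μ) +
        √(∫ x, u₃ x ^ 2 ∂μ) * √(∫ x, ϱ x ^ 2 * ‖Dθ x‖ ^ 2 ∂μ) := by
  have henergy : ∫ x, energyDensity u₃ ϱ Du₃ Dϱ Dθ x * u₃ x ^ 2 ∂μ ≤
      δ ^ 2 * ∫ x, energyDensity u₃ ϱ Du₃ Dϱ Dθ x ∂μ :=
    integral_mul_sq_le_of_abs_le h.integrable_energyDensity energyDensity_nonneg hu₃_le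
  have hcoupling : c * ∫ x, ϱ x ^ 2 * u₃ x * d x ∂μ ≤
      √(∫ x, u₃ x ^ 2 ∂μ) * √(∫ x, ϱ x ^ 2 * ‖Dθ x‖ ^ 2 ∂μ) :=
    calc c * ∫ x, ϱ x ^ 2 * u₃ x * d x ∂μ ≤ |c| * |∫ x, ϱ x ^ 2 * u₃ x * d x ∂μ| :=
          (le_abs_self _).trans_eq (abs_mul _ _)
      _ ≤ |∫ x, ϱ x ^ 2 * u₃ x * d x ∂μ| := mul_le_of_le_one_left (abs_nonneg _) hc
      _ ≤ _ := abs_integral_sq_mul_mul_le_sqrt_mul_sqrt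
          ((memLp_two_iff_integrable_sq hu₃).2 h.integrable_sq) hϱ hϱ_le hd hd_le
          h.integrable_sq_mul_norm_Dθ_sq
  rw [h.integral_energyDensity] at henergy
  linarith [identity, henergy, hcoupling]

end HasFiniteEnergy

end Energy

theorem stmt17_general {E : Type*} [NormedAddCommGroup E] [NormedSpace ℝ E] [MeasurableSpace E]
    [OpensMeasurableSpace E] {μ : Measure E} {c : ℝ} (hc : |c| ≤ 1) {v : E} (hv : ‖v‖ ≤ 1)
    {u₃ ϱ θ : E → ℝ} {u₃' ϱ' θ' : E → E →L[ℝ] ℝ}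
    (hu₃ : ∀ x, HasFDerivAt u₃ (u₃' x) x) (hϱ : ∀ x, HasFDerivAt ϱ (ϱ' x) x)
    (hθ : ∀ x, HasFDerivAt θ (θ' x) x)
    (hsphere : ∀ x, ϱ x ^ 2 = 1 - u₃ x ^ 2) (hu₃_le : ∀ x, |u₃ x| ≤ 1 / 2)
    (hfin : HasFiniteEnergy u₃ ϱ u₃' ϱ' θ' μ)
    (identity : (∫ x, ‖u₃' x‖ ^ 2 ∂μ) + (∫ x, u₃ x ^ 2 ∂μ) =
      2 * (∫ x, energyDensity u₃ ϱ u₃' ϱ' θ' x * u₃ x ^ 2 ∂μ) +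
        c * ∫ x, ϱ x ^ 2 * u₃ x * θ' x v ∂μ)
    (hϱ'_le : ∫ x, ‖ϱ' x‖ ^ 2 ∂μ ≤ (7 / 18) * ∫ x, u₃ x ^ 2 ∂μ)
    (hθ'_le : ∫ x, ϱ x ^ 2 * ‖θ' x‖ ^ 2 ∂μ ≤ (4 / 3) * ∫ x, u₃ x ^ 2 ∂μ) :
    (∫ x, ‖u₃' x‖ ^ 2 ∂μ ≤ 2 * ∫ x, u₃ x ^ 2 ∂μ) ∧
      (∫ x, energyDensity u₃ ϱ u₃' ϱ' θ' x ∂μ ≤ 3 * ∫ x, u₃ x ^ 2 ∂μ) := by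
  have hu₃_meas : Measurable u₃ :=
    (continuous_iff_continuousAt.2 fun x ↦ (hu₃ x).continuousAt).measurable
  have hϱ_meas : Measurable ϱ :=
    (continuous_iff_continuousAt.2 fun x ↦ (hϱ x).continuousAt).measurable
  have hθ'_meas : Measurable fun x ↦ θ' x v := by
    simpa only [(hθ _).fderiv] using measurable_fderiv_apply_const ℝ θ v
  have hkey := hfin.one_sub_sq_mul_integral_add_integral_le hc
    hu₃_meas.aestronglyMeasurable hu₃_le hϱ_meas.aestronglyMeasurable
    (fun x ↦ by linarith [hsphere x, sq_nonneg (u₃ x)]) hθ'_meas.aestronglyMeasurable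
    (fun x ↦ (θ' x).unit_le_opNorm v hv) identity
  have hu₃_nonneg : 0 ≤ ∫ x, u₃ x ^ 2 ∂μ := integral_nonneg fun x ↦ sq_nonneg _
  have hθ'_nonneg : 0 ≤ ∫ x, ϱ x ^ 2 * ‖θ' x‖ ^ 2 ∂μ := integral_nonneg fun x ↦ by positivity
  have hcoupling_le : √(∫ x, u₃ x ^ 2 ∂μ) * √(∫ x, ϱ x ^ 2 * ‖θ' x‖ ^ 2 ∂μ) ≤
      (7 / 6) * ∫ x, u₃ x ^ 2 ∂μ := by
    have hamgm := two_mul_le_add_sq (√(∫ x, u₃ x ^ 2 ∂μ)) (√(∫ x, ϱ x ^ 2 * ‖θ' x‖ ^ 2 ∂μ))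
    rw [Real.sq_sqrt hu₃_nonneg, Real.sq_sqrt hθ'_nonneg] at hamgm
    linarith [hamgm, hθ'_le]
  have hu₃'_le : ∫ x, ‖u₃' x‖ ^ 2 ∂μ ≤ 2 * ∫ x, u₃ x ^ 2 ∂μ := by
    linarith [hkey, hcoupling_le, hϱ'_le, hθ'_le]
  refine ⟨hu₃'_le, ?_⟩
  rw [hfin.integral_energyDensity]
  linarith [hu₃'_le, hϱ'_le, hθ'_le]

/-- From the integral identities and the bounds on ∫|∇ϱ|² and ∫ϱ²|∇θ|², a solution with
    ‖u₃‖_∞ ≤ 1/2 satisfies ∫|∇u₃|² ≤ 2∫u₃² and E(u) ≤ 3∫u₃². -/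
theorem stmt17 (N : ℕ) (hN : 1 ≤ N) (c : ℝ) (hc : c ∈ Set.Icc (0:ℝ) 1)
    (u₃ ϱ θ : EuclideanSpace ℝ (Fin N) → ℝ)
    (hϱ : ∀ x, (ϱ x)^2 = 1 - (u₃ x)^2)
    (hδ : ∀ x, |u₃ x| ≤ 1/2)
    (hu₃ : Differentiable ℝ u₃) (hϱd : Differentiable ℝ ϱ) (hθ : Differentiable ℝ θ)
    (e d1θ : EuclideanSpace ℝ (Fin N) → ℝ)
    (hd1θ : ∀ x, d1θ x = fderiv ℝ θ x (EuclideanSpace.single ⟨0, by omega⟩ 1))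
    (he : ∀ x, e x = (1/2) * (‖fderiv ℝ ϱ x‖^2 + (ϱ x)^2 * ‖fderiv ℝ θ x‖^2 +
                              ‖fderiv ℝ u₃ x‖^2 + (u₃ x)^2))
    (hint1 : Integrable (fun x => (u₃ x)^2) volume)
    (hint2 : Integrable (fun x => ‖fderiv ℝ u₃ x‖^2) volume)
    (hint3 : Integrable (fun x => ‖fderiv ℝ ϱ x‖^2) volume)
    (hint4 : Integrable (fun x => (ϱ x)^2 * ‖fderiv ℝ θ x‖^2) volume)
    (hint5 : Integrable (fun x => u₃ x * d1θ x) volume)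
    (hint6 : Integrable (fun x => e x * (u₃ x)^2) volume)
    (hint7 : Integrable (fun x => (ϱ x)^2 * u₃ x * d1θ x) volume)
    (hid1 : ∫ x, (ϱ x)^2 * ‖fderiv ℝ θ x‖^2 = c * ∫ x, u₃ x * d1θ x)
    (hid2 : (∫ x, ‖fderiv ℝ u₃ x‖^2) + (∫ x, (u₃ x)^2)
            = 2 * (∫ x, e x * (u₃ x)^2) + c * ∫ x, (ϱ x)^2 * u₃ x * d1θ x)
    (h1 : ∫ x, ‖fderiv ℝ ϱ x‖^2 ≤ (7/18) * ∫ x, (u₃ x)^2)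
    (h2 : ∫ x, (ϱ x)^2 * ‖fderiv ℝ θ x‖^2 ≤ (4/3) * ∫ x, (u₃ x)^2) :
    (∫ x, ‖fderiv ℝ u₃ x‖^2 ≤ 2 * ∫ x, (u₃ x)^2) ∧
    (∫ x, e x ≤ 3 * ∫ x, (u₃ x)^2) := by
  obtain ⟨rfl, rfl⟩ : e = energyDensity u₃ ϱ (fderiv ℝ u₃) (fderiv ℝ ϱ) (fderiv ℝ θ) ∧
      d1θ = fun x ↦ fderiv ℝ θ x (EuclideanSpace.single ⟨0, by omega⟩ 1) :=
    ⟨funext he, funext hd1θ⟩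
  exact stmt17_general (abs_le.2 ⟨by linarith [hc.1], hc.2⟩) (by simp)
    (fun x ↦ (hu₃ x).hasFDerivAt) (fun x ↦ (hϱd x).hasFDerivAt) (fun x ↦ (hθ x).hasFDerivAt)
    hϱ hδ ⟨hint1, hint2, hint3, hint4⟩ hid2 h1 h2
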